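/- Let 1/2 < α < 1 and let t satisfy απ ≤ t ≤ π. Then the infimum over all f ∈ K(α) and z ∈ 𝔻 \ {0} of Re(e^{it}·f(z)/z) equals (cos t)/(2α−1); that is, Q_α(t) = (2α−1)^{−1} cos t. -/

import Mathlib

/-- The unit disk `{z : ℂ | |z| < 1}`. -/
noncomputable def unitDisk : Set ℂ := Metric.ball 0 1

/-- The extremal convex function of order `α`:
`k_α(z) = ((1-z)^(2α-1) - 1)/(1-2α)` (so that `k_α(0)=0`, `k_α'(0)=1`),
with `k_{1/2}(z) = -log(1-z)` (principal branches). -/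
noncomputable def kfun (α : ℝ) (z : ℂ) : ℂ :=
  if α = 1 / 2 then -Complex.log (1 - z)
  else ((1 - z) ^ ((2 * α - 1 : ℝ) : ℂ) - 1) / ((1 - 2 * α : ℝ) : ℂ)

/-- `h_α(z) = k_α(z)/z` for `z ≠ 0`, `h_α(0) = 1`. -/
noncomputable def hfun (α : ℝ) (z : ℂ) : ℂ :=
  if z = 0 then 1 else kfun α z / z

/-- `f ∈ K(α)`: `f` is analytic on the unit disk, normalized by `f(0)=0`, `f'(0)=1`,
with nonvanishing derivative and `Re(1 + z f''(z)/f'(z)) > α` on the disk. -/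
def IsConvexOfOrder (α : ℝ) (f : ℂ → ℂ) : Prop :=
  DifferentiableOn ℂ f unitDisk ∧ f 0 = 0 ∧ deriv f 0 = 1 ∧
    ∀ z ∈ unitDisk, deriv f z ≠ 0 ∧
      α < (1 + z * deriv (deriv f) z / deriv f z).re

open MeasureTheory Set Filter Topology

/-- Euler's reflection formula as an integral over the half-line. -/
theorem integral_rpow_div_one_add_sq {p : ℝ} (hp0 : 0 < p) (hp2 : p < 2) :
    ∫ x in Ioi (0 : ℝ), x ^ (p - 1) / (1 + x ^ 2) = Real.pi / (2 * Real.sin (Real.pi * p / 2)) := by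
  have hbeta : ∫ u in Ioo (0 : ℝ) 1, u ^ (p / 2 - 1) * (1 - u) ^ (-(p / 2)) =
      Real.pi / Real.sin (Real.pi * p / 2) := by
    have h1 := Complex.Gamma_mul_Gamma_eq_betaIntegral (s := ((p / 2 : ℝ) : ℂ))
      (t := ((1 - p / 2 : ℝ) : ℂ)) (by simpa using hp0) (by rw [Complex.ofReal_re]; linarith)
    have h2 := Complex.Gamma_mul_Gamma_one_sub ((p / 2 : ℝ) : ℂ)
    rw [← Complex.ofReal_add, add_sub_cancel, Complex.ofReal_one, Complex.Gamma_one, one_mul,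
      Complex.betaIntegral, intervalIntegral.integral_of_le zero_le_one,
      integral_Ioc_eq_integral_Ioo] at h1
    rw [← Complex.ofReal_one, ← Complex.ofReal_sub, h1] at h2
    rw [setIntegral_congr_fun (g := fun u : ℝ =>
      ((u ^ (p / 2 - 1) * (1 - u) ^ (-(p / 2)) : ℝ) : ℂ)) measurableSet_Ioo ?_,
      integral_complex_ofReal] at h2
    · have h3 : Real.pi * (p / 2) = Real.pi * p / 2 := by ring
      rw [← Complex.ofReal_mul, ← Complex.ofReal_sin, ← Complex.ofReal_div, h3] at h2
      exact_mod_cast h2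
    · intro u hu
      simp only [Complex.ofReal_mul]
      rw [Complex.ofReal_cpow hu.1.le, Complex.ofReal_cpow (by linarith [hu.2])]
      push_cast
      congr 2
      ring
  have himage : (fun x : ℝ => x ^ 2 / (1 + x ^ 2)) '' Ioi 0 = Ioo 0 1 := by
    ext u
    simp only [mem_image, mem_Ioi, mem_Ioo]
    constructor
    · rintro ⟨x, hx, rfl⟩
      refine ⟨by positivity, ?_⟩
      rw [div_lt_one (by positivity)]
      linarith
    · rintro ⟨h0, h1⟩
      have h1' : 0 < 1 - u := by linarith
      refine ⟨Real.sqrt (u / (1 - u)), Real.sqrt_pos.2 (by positivity), ?_⟩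
      rw [Real.sq_sqrt (by positivity)]
      field_simp
      ring
  have hinj : InjOn (fun x : ℝ => x ^ 2 / (1 + x ^ 2)) (Ioi 0) := by
    intro x hx y hy hxy
    simp only [mem_Ioi] at hx hy
    simp only at hxy
    rw [div_eq_div_iff (by positivity) (by positivity)] at hxy
    exact (pow_left_inj₀ hx.le hy.le two_ne_zero).1 (by linarith)
  have hderiv : ∀ x ∈ Ioi (0 : ℝ), HasDerivWithinAt (fun x : ℝ => x ^ 2 / (1 + x ^ 2))
      (2 * x / (1 + x ^ 2) ^ 2) (Ioi 0) x := by
    intro x _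
    have h := ((hasDerivAt_pow 2 x).div ((hasDerivAt_pow 2 x).const_add 1)
      (by positivity)).hasDerivWithinAt (s := Ioi 0)
    refine h.congr_deriv ?_
    push_cast
    ring
  have hsub := integral_image_eq_integral_abs_deriv_smul measurableSet_Ioi hderiv hinj
    (fun u => u ^ (p / 2 - 1) * (1 - u) ^ (-(p / 2)))
  rw [himage, hbeta] at hsub
  have hpt : ∀ x ∈ Ioi (0 : ℝ), |2 * x / (1 + x ^ 2) ^ 2| •
      ((x ^ 2 / (1 + x ^ 2)) ^ (p / 2 - 1) * (1 - x ^ 2 / (1 + x ^ 2)) ^ (-(p / 2))) =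
      2 * (x ^ (p - 1) / (1 + x ^ 2)) := by
    intro x hx
    have hx : 0 < x := hx
    have hq : 0 < 1 + x ^ 2 := by positivity
    have h1 : 1 - x ^ 2 / (1 + x ^ 2) = (1 + x ^ 2)⁻¹ := by field_simp; ring
    rw [h1, abs_of_pos (by positivity), Real.div_rpow (by positivity) hq.le, Real.inv_rpow hq.le,
      Real.rpow_neg hq.le, inv_inv, Real.rpow_sub_one hq.ne', Real.rpow_sub_one (by positivity),
      Real.rpow_sub_one hx.ne', ← Real.rpow_natCast x 2, ← Real.rpow_mul hx.le, smul_eq_mul]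
    have : ((2 : ℕ) : ℝ) * (p / 2) = p := by push_cast; ring
    rw [this]
    have : 0 < (1 + x ^ ((2 : ℕ) : ℝ)) ^ (p / 2) := by positivity
    simp only [Real.rpow_natCast] at *
    field_simp
  rw [setIntegral_congr_fun measurableSet_Ioi hpt, integral_const_mul] at hsub
  rw [mul_comm 2, ← div_div, hsub]
  ring

theorem integrableOn_rpow_div_one_add_sq {p : ℝ} (hp0 : 0 < p) (hp2 : p < 2) :
    IntegrableOn (fun x : ℝ => x ^ (p - 1) / (1 + x ^ 2)) (Ioi 0) := by
  have hpi := Real.pi_pos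
  have hsin : 0 < Real.sin (Real.pi * p / 2) :=
    Real.sin_pos_of_pos_of_lt_pi (by positivity) (by nlinarith)
  refine Integrable.of_integral_ne_zero ?_
  rw [integral_rpow_div_one_add_sq hp0 hp2]
  positivity

theorem integral_rpow_mul_sub_div_one_add_sq_nonneg {β A B c : ℝ} (hβ0 : 0 < β) (hβ1 : β < 1)
    (hAB : B * Real.sin (Real.pi * β / 2) ≤ A * Real.cos (Real.pi * β / 2))
    (hB : 0 ≤ B) (hc : 0 < c) (hAc : A ≤ B * c) :
    IntegrableOn (fun x : ℝ => x ^ (β - 1) * (A - B * x) / (1 + x ^ 2)) (Ioo 0 c) ∧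
    0 ≤ ∫ x in Ioo (0 : ℝ) c, x ^ (β - 1) * (A - B * x) / (1 + x ^ 2) := by
  have hpi := Real.pi_pos
  have hsin : 0 < Real.sin (Real.pi * β / 2) :=
    Real.sin_pos_of_pos_of_lt_pi (by positivity) (by nlinarith)
  have hcos : 0 < Real.cos (Real.pi * β / 2) :=
    Real.cos_pos_of_mem_Ioo ⟨by nlinarith, by nlinarith⟩
  have i1 := (integrableOn_rpow_div_one_add_sq hβ0 (by linarith)).const_mul A
  have i2 := (integrableOn_rpow_div_one_add_sq (p := β + 1) (by linarith)
    (by linarith)).const_mul B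
  have heq : ∀ x ∈ Ioi (0 : ℝ), A * (x ^ (β - 1) / (1 + x ^ 2)) -
      B * (x ^ (β + 1 - 1) / (1 + x ^ 2)) = x ^ (β - 1) * (A - B * x) / (1 + x ^ 2) := by
    intro x hx
    have hx : 0 < x := hx
    have : x ^ (β + 1 - 1) = x ^ (β - 1) * x := by
      rw [← Real.rpow_add_one hx.ne']; ring_nf
    rw [this]
    ring
  have hint : IntegrableOn (fun x : ℝ => x ^ (β - 1) * (A - B * x) / (1 + x ^ 2)) (Ioi 0) :=
    (integrableOn_congr_fun heq measurableSet_Ioi).1 (i1.sub i2)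
  have htotal : 0 ≤ ∫ x in Ioi (0 : ℝ), x ^ (β - 1) * (A - B * x) / (1 + x ^ 2) := by
    have h3 : Real.pi * (β + 1) / 2 = Real.pi * β / 2 + Real.pi / 2 := by ring
    rw [← setIntegral_congr_fun measurableSet_Ioi heq, integral_sub i1 i2, integral_const_mul,
      integral_const_mul, integral_rpow_div_one_add_sq hβ0 (by linarith),
      integral_rpow_div_one_add_sq (by linarith) (by linarith), h3, Real.sin_add_pi_div_two]
    have : A * (Real.pi / (2 * Real.sin (Real.pi * β / 2))) -
        B * (Real.pi / (2 * Real.cos (Real.pi * β / 2))) =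
        Real.pi * (A * Real.cos (Real.pi * β / 2) - B * Real.sin (Real.pi * β / 2)) /
        (2 * Real.sin (Real.pi * β / 2) * Real.cos (Real.pi * β / 2)) := by
      field_simp
    rw [this]
    exact div_nonneg (mul_nonneg hpi.le (by linarith)) (by positivity)
  refine ⟨hint.mono_set Ioo_subset_Ioi_self, ?_⟩
  have hsplit : Ioo 0 c ∪ Ici c = Ioi (0 : ℝ) := Ioo_union_Ici_eq_Ioi hc
  have hdisj : Disjoint (Ioo 0 c) (Ici c) :=
    Set.disjoint_left.2 fun x hx hx' => not_lt.2 hx' hx.2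
  rw [← hsplit, setIntegral_union hdisj measurableSet_Ici (hint.mono_set Ioo_subset_Ioi_self)
    (hint.mono_set (Ici_subset_Ioi.2 hc))] at htotal
  have htail : ∫ x in Ici c, x ^ (β - 1) * (A - B * x) / (1 + x ^ 2) ≤ 0 := by
    refine setIntegral_nonpos measurableSet_Ici fun x hx => ?_
    have hx : c ≤ x := hx
    have hx0 : 0 < x := hc.trans_le hx
    refine div_nonpos_of_nonpos_of_nonneg ?_ (by positivity)
    exact mul_nonpos_of_nonneg_of_nonpos (by positivity) (by nlinarith)
  linarith

theorem integral_Ioo_sector_nonneg {β A B c : ℝ} (hβ0 : 0 < β) (hβ1 : β < 1)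
    (hAB : B * Real.sin (Real.pi * β / 2) ≤ A * Real.cos (Real.pi * β / 2))
    (hA : 0 < A) (hB : 0 ≤ B) (hc : 0 < c)
    (hint : IntegrableOn (fun s : ℝ => (1 - s) ^ (β - 1) * s * (A * (1 + s) - B * c * (1 - s)) /
      ((1 + s) ^ 2 + c ^ 2 * (1 - s) ^ 2)) (Ioo 0 1)) :
    0 ≤ ∫ s in Ioo (0 : ℝ) 1, (1 - s) ^ (β - 1) * s * (A * (1 + s) - B * c * (1 - s)) /
      ((1 + s) ^ 2 + c ^ 2 * (1 - s) ^ 2) := by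
  rcases le_total (B * c) A with hAc | hAc
  · refine setIntegral_nonneg measurableSet_Ioo fun s hs => ?_
    have h1 : 0 < 1 - s := by linarith [hs.2]
    have h2 : 0 < s := hs.1
    have h3 : 0 ≤ A * (1 + s) - B * c * (1 - s) := by nlinarith
    positivity
  obtain ⟨gint, gpos⟩ := integral_rpow_mul_sub_div_one_add_sq_nonneg hβ0 hβ1 hAB hB hc hAc
  have himage : (fun s : ℝ => c * (1 - s) / (1 + s)) '' Ioo 0 1 = Ioo 0 c := by
    ext x
    simp only [mem_image, mem_Ioo]
    constructor
    · rintro ⟨s, ⟨h0, h1⟩, rfl⟩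
      have : 0 < 1 - s := by linarith
      refine ⟨by positivity, ?_⟩
      rw [div_lt_iff₀ (by positivity)]
      nlinarith
    · rintro ⟨h0, h1⟩
      refine ⟨(c - x) / (c + x), ⟨div_pos (by linarith) (by linarith), ?_⟩, ?_⟩
      · rw [div_lt_one (by linarith)]; linarith
      · have : c + x ≠ 0 := by linarith
        field_simp
        ring
  have hinj : InjOn (fun s : ℝ => c * (1 - s) / (1 + s)) (Ioo 0 1) := by
    intro x hx y hy hxy
    have := hx.1
    have := hy.1
    simp only at hxy
    rw [div_eq_div_iff (by positivity) (by positivity)] at hxy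
    nlinarith
  have hderiv : ∀ s ∈ Ioo (0 : ℝ) 1, HasDerivWithinAt (fun s : ℝ => c * (1 - s) / (1 + s))
      (-(2 * c) / (1 + s) ^ 2) (Ioo 0 1) s := by
    intro s hs
    have := hs.1
    have h := ((((hasDerivAt_id s).const_sub 1).const_mul c).div ((hasDerivAt_id s).const_add 1)
      (by simp only [id]; positivity)).hasDerivWithinAt (s := Ioo 0 1)
    refine h.congr_deriv ?_
    simp only [id]
    ring
  have hpt : ∀ s ∈ Ioo (0 : ℝ) 1, |-(2 * c) / (1 + s) ^ 2| •
      ((c * (1 - s) / (1 + s)) ^ (β - 1) * (A - B * (c * (1 - s) / (1 + s))) /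
        (1 + (c * (1 - s) / (1 + s)) ^ 2)) =
      2 * c ^ β * ((1 - s) ^ (β - 1) * (1 + s) ^ (-β) * (A * (1 + s) - B * c * (1 - s)) /
      ((1 + s) ^ 2 + c ^ 2 * (1 - s) ^ 2)) := by
    intro s hs
    have h1 : 0 < 1 - s := by linarith [hs.2]
    have h2 : 0 < 1 + s := by linarith [hs.1]
    rw [neg_div, abs_neg, abs_of_pos (by positivity), Real.div_rpow (by positivity) h2.le,
      Real.mul_rpow hc.le h1.le, Real.rpow_sub_one hc.ne', Real.rpow_sub_one h2.ne',
      Real.rpow_neg h2.le, smul_eq_mul]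
    have : 0 < (1 + s) ^ β := by positivity
    have : 0 < (1 + s) ^ 2 + c ^ 2 * (1 - s) ^ 2 := by positivity
    have : 0 < 1 + (c * (1 - s) / (1 + s)) ^ 2 := by positivity
    field_simp
  have hsub := integral_image_eq_integral_abs_deriv_smul measurableSet_Ioo hderiv hinj
    (fun x => x ^ (β - 1) * (A - B * x) / (1 + x ^ 2))
  have hsubint := (integrableOn_image_iff_integrableOn_abs_deriv_smul measurableSet_Ioo hderiv hinj
    (fun x => x ^ (β - 1) * (A - B * x) / (1 + x ^ 2)))
  rw [himage] at hsub hsubint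
  rw [hsub, setIntegral_congr_fun measurableSet_Ioo hpt, integral_const_mul] at gpos
  have gint' := (integrableOn_congr_fun hpt measurableSet_Ioo).1 (hsubint.1 gint)
  have hcβ : 0 < 2 * c ^ β := by positivity
  have gint'' : IntegrableOn (fun s : ℝ => (1 - s) ^ (β - 1) * (1 + s) ^ (-β) *
      (A * (1 + s) - B * c * (1 - s)) / ((1 + s) ^ 2 + c ^ 2 * (1 - s) ^ 2)) (Ioo 0 1) :=
    (integrable_const_mul_iff (IsUnit.mk0 _ hcβ.ne') _).1 gint'
  set s₀ : ℝ := (B * c - A) / (B * c + A) with hs₀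
  have hs₀0 : 0 ≤ s₀ := div_nonneg (by linarith) (by positivity)
  have hcross : A * (1 + s₀) = B * c * (1 - s₀) := by
    have : B * c + A ≠ 0 := by positivity
    rw [hs₀]
    field_simp
    ring
  have hcmp := setIntegral_mono_on (gint''.const_mul (s₀ * (1 + s₀) ^ β)) hint measurableSet_Ioo
    (fun s hs => by
      have h1 : 0 < 1 - s := by linarith [hs.2]
      have h0 : 0 < s := hs.1
      have h2 : 0 < 1 + s := by linarith
      have hlin : A * (1 + s) - B * c * (1 - s) = (A + B * c) * (s - s₀) := by linarith
      have hkey : 0 ≤ (s - s₀) * (s * (1 + s) ^ β - s₀ * (1 + s₀) ^ β) := by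
        rcases le_total s₀ s with h | h
        · refine mul_nonneg (by linarith) (sub_nonneg.2 ?_)
          gcongr
        · refine mul_nonneg_of_nonpos_of_nonpos (by linarith) (sub_nonpos.2 ?_)
          gcongr
      rw [← sub_nonneg, hlin, Real.rpow_neg h2.le]
      have hp : 0 < (1 + s) ^ β := by positivity
      have hq : 0 < (1 + s) ^ 2 + c ^ 2 * (1 - s) ^ 2 := by positivity
      have : (1 - s) ^ (β - 1) * s * ((A + B * c) * (s - s₀)) /
          ((1 + s) ^ 2 + c ^ 2 * (1 - s) ^ 2) - s₀ * (1 + s₀) ^ β *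
          ((1 - s) ^ (β - 1) * ((1 + s) ^ β)⁻¹ * ((A + B * c) * (s - s₀)) /
          ((1 + s) ^ 2 + c ^ 2 * (1 - s) ^ 2)) =
          (1 - s) ^ (β - 1) * (A + B * c) * ((1 + s) ^ β)⁻¹ /
          ((1 + s) ^ 2 + c ^ 2 * (1 - s) ^ 2) *
          ((s - s₀) * (s * (1 + s) ^ β - s₀ * (1 + s₀) ^ β)) := by
        field_simp
      rw [this]
      positivity)
  rw [integral_const_mul] at hcmp
  refine le_trans (mul_nonneg (by positivity) ?_) hcmp
  exact nonneg_of_mul_nonneg_right gpos hcβ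

theorem integrableOn_one_sub_rpow {β : ℝ} (hβ0 : 0 < β) :
    IntegrableOn (fun s : ℝ => (1 - s) ^ (β - 1)) (Ioo 0 1) := by
  have h := (intervalIntegral.intervalIntegrable_rpow' (a := 0) (b := 1) (r := β - 1)
    (by linarith)).comp_sub_left 1
  simp only [sub_zero, sub_self] at h
  exact (intervalIntegrable_iff_integrableOn_Ioo_of_le zero_le_one).1 h.symm

theorem integral_one_sub_rpow {β : ℝ} (hβ0 : 0 < β) :
    ∫ s in Ioo (0 : ℝ) 1, (1 - s) ^ (β - 1) = 1 / β := by
  rw [← integral_Ioc_eq_integral_Ioo, ← intervalIntegral.integral_of_le zero_le_one,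
    intervalIntegral.integral_comp_sub_left (fun x : ℝ => x ^ (β - 1)),
    integral_rpow (Or.inl (by linarith))]
  simp [Real.zero_rpow hβ0.ne']

theorem norm_div_sub_ofReal_le {ζ : ℂ} (hζ : ‖ζ‖ = 1) {s : ℝ} (hs : s < 1) (hs0 : 0 < s) :
    ‖ζ / (ζ - s)‖ ≤ (1 - s)⁻¹ := by
  rw [norm_div, hζ, one_div]
  have h := norm_sub_norm_le ζ (s : ℂ)
  rw [hζ, Complex.norm_real, Real.norm_of_nonneg hs0.le] at h
  exact inv_anti₀ (by linarith) h

theorem integrableOn_cauchy_kernel {β : ℝ} (hβ0 : 0 < β) (w : ℂ) {ζ : ℂ} (hζ : ‖ζ‖ = 1) :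
    IntegrableOn (fun s : ℝ => (1 - s) ^ β * (w * (ζ / (ζ - s))).re) (Ioo 0 1) := by
  refine Integrable.mono' ((integrableOn_one_sub_rpow hβ0).const_mul ‖w‖)
    (Measurable.aestronglyMeasurable (by fun_prop)) ?_
  refine (ae_restrict_iff' measurableSet_Ioo).2 (Eventually.of_forall fun s hs => ?_)
  have h1 : 0 < 1 - s := by linarith [hs.2]
  rw [norm_mul, Real.norm_of_nonneg (by positivity), Real.rpow_sub_one h1.ne']
  have h2 : ‖(w * (ζ / (ζ - s))).re‖ ≤ ‖w‖ * (1 - s)⁻¹ := by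
    refine (Complex.abs_re_le_norm _).trans ?_
    rw [norm_mul]
    exact mul_le_mul_of_nonneg_left (norm_div_sub_ofReal_le hζ hs.2 hs.1) (norm_nonneg _)
  calc (1 - s) ^ β * ‖(w * (ζ / (ζ - s))).re‖ ≤ (1 - s) ^ β * (‖w‖ * (1 - s)⁻¹) := by gcongr
    _ = ‖w‖ * ((1 - s) ^ β / (1 - s)) := by ring

/-- The bound for the extreme points `z ↦ ζ / (ζ - z)`. -/
theorem cos_div_le_integral_cauchy_kernel {β t : ℝ} (hβ0 : 0 < β) (hβ1 : β < 1)
    (ht0 : Real.pi / 2 + Real.pi * β / 2 ≤ t) (ht1 : t ≤ Real.pi) {ζ : ℂ} (hζ : ‖ζ‖ = 1)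
    (hζ1 : ζ ≠ 1) :
    Real.cos t / β ≤ ∫ s in Ioo (0 : ℝ) 1,
      (1 - s) ^ β * (Complex.exp (t * Complex.I) * (ζ / (ζ - s))).re := by
  have hpi := Real.pi_pos
  have hπβ : 0 < Real.pi * β / 2 := by positivity
  have hcos : Real.cos t < 0 :=
    Real.cos_neg_of_pi_div_two_lt_of_lt (by linarith) (by linarith)
  have hsin : 0 ≤ Real.sin t := Real.sin_nonneg_of_nonneg_of_le_pi (by linarith) ht1
  have hAB : Real.sin t * Real.sin (Real.pi * β / 2) ≤
      -Real.cos t * Real.cos (Real.pi * β / 2) := by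
    have h := Real.cos_nonpos_of_pi_div_two_le_of_le (x := t - Real.pi * β / 2)
      (by linarith) (by linarith)
    rw [Real.cos_sub] at h
    linarith
  set a := ζ.re with ha
  set b := ζ.im with hb
  have hab : a ^ 2 + b ^ 2 = 1 := by
    have := Complex.sq_norm ζ
    rw [hζ, Complex.normSq_apply] at this
    nlinarith
  have ha1 : a < 1 := by
    refine lt_of_le_of_ne (by nlinarith [sq_nonneg b]) fun h => hζ1 ?_
    have hb0 : b = 0 := by
      rw [h] at hab
      exact pow_eq_zero_iff two_ne_zero |>.1 (by linarith)
    exact Complex.ext h hb0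
  have hpt : ∀ s ∈ Ioo (0 : ℝ) 1,
      (1 - s) ^ β * (Complex.exp (t * Complex.I) * (ζ / (ζ - s))).re -
        Real.cos t * (1 - s) ^ (β - 1) = (1 - s) ^ (β - 1) * s *
        (-Real.cos t * (1 + s) * (1 - a) + Real.sin t * b * (1 - s)) / (1 - 2 * a * s + s ^ 2) := by
    intro s hs
    have h1 : 0 < 1 - s := by linarith [hs.2]
    have hq : 0 < 1 - 2 * a * s + s ^ 2 := by nlinarith [mul_pos hs.1 (sub_pos.2 ha1)]
    have hre : (Complex.exp (t * Complex.I) * (ζ / (ζ - s))).re =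
        (Real.cos t * (1 - s * a) + Real.sin t * (s * b)) / (1 - 2 * a * s + s ^ 2) := by
      rw [Complex.exp_mul_I, ← Complex.ofReal_cos, ← Complex.ofReal_sin]
      have hn : Complex.normSq (ζ - s) = 1 - 2 * a * s + s ^ 2 := by
        rw [Complex.normSq_apply]
        simp only [Complex.sub_re, Complex.sub_im, Complex.ofReal_re, Complex.ofReal_im, ← ha, ← hb]
        linarith
      simp only [Complex.mul_re, Complex.add_re, Complex.add_im, Complex.div_re, Complex.div_im,
        Complex.mul_im, Complex.sub_re, Complex.sub_im, Complex.ofReal_re, Complex.ofReal_im,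
        Complex.I_re, Complex.I_im, hn, ← ha, ← hb]
      rw [eq_div_iff hq.ne']
      set q := 1 - 2 * a * s + s ^ 2
      field_simp
      linear_combination (Real.cos t) * hab
    have hβ' : (1 - s) ^ β = (1 - s) ^ (β - 1) * (1 - s) := by
      rw [Real.rpow_sub_one h1.ne']; field_simp
    rw [hre, hβ', eq_div_iff hq.ne', sub_mul, mul_assoc _ (_ / _), div_mul_cancel₀ _ hq.ne']
    ring
  have hi1 := integrableOn_cauchy_kernel hβ0 (Complex.exp (t * Complex.I)) hζ
  have hi2 := (integrableOn_one_sub_rpow hβ0).const_mul (Real.cos t)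
  have hi := (integrableOn_congr_fun hpt measurableSet_Ioo).1 (hi1.sub hi2)
  have hdiff := integral_sub hi1 hi2
  rw [integral_const_mul, integral_one_sub_rpow hβ0, setIntegral_congr_fun measurableSet_Ioo hpt]
    at hdiff
  suffices h : 0 ≤ ∫ s in Ioo (0 : ℝ) 1, (1 - s) ^ (β - 1) * s *
      (-Real.cos t * (1 + s) * (1 - a) + Real.sin t * b * (1 - s)) / (1 - 2 * a * s + s ^ 2) by
    have : Real.cos t / β = Real.cos t * (1 / β) := by ring
    rw [this]
    linarith
  rcases le_or_gt 0 b with hb0 | hb0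
  · refine setIntegral_nonneg measurableSet_Ioo fun s hs => ?_
    have h1 : 0 < 1 - s := by linarith [hs.2]
    have h0 : 0 < s := hs.1
    have hq : 0 < 1 - 2 * a * s + s ^ 2 := by nlinarith [mul_pos hs.1 (sub_pos.2 ha1)]
    have h2 : 0 < -Real.cos t * (1 + s) * (1 - a) :=
      mul_pos (mul_pos (by linarith) (by linarith)) (by linarith)
    positivity
  · set c := -b / (1 - a) with hc
    have h1a : 0 < 1 - a := by linarith
    have hc0 : 0 < c := div_pos (by linarith) h1a
    have hca : c * (1 - a) = -b := by rw [hc]; field_simp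
    have hc2 : c ^ 2 * (1 - a) = 1 + a := by
      have : c ^ 2 * (1 - a) * (1 - a) = (1 + a) * (1 - a) := by
        calc c ^ 2 * (1 - a) * (1 - a) = (c * (1 - a)) ^ 2 := by ring
          _ = (1 + a) * (1 - a) := by rw [hca]; linarith
      exact mul_right_cancel₀ h1a.ne' this
    have hpt' : ∀ s ∈ Ioo (0 : ℝ) 1, (1 - s) ^ (β - 1) * s *
        (-Real.cos t * (1 + s) * (1 - a) + Real.sin t * b * (1 - s)) / (1 - 2 * a * s + s ^ 2) =
        2 * ((1 - s) ^ (β - 1) * s * (-Real.cos t * (1 + s) - Real.sin t * c * (1 - s)) /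
          ((1 + s) ^ 2 + c ^ 2 * (1 - s) ^ 2)) := by
      intro s hs
      have h0 : 0 < s := hs.1
      have h1 : 0 < 1 - s := by linarith [hs.2]
      have hq' : 1 - 2 * a * s + s ^ 2 =
          (1 - a) * ((1 + s) ^ 2 + c ^ 2 * (1 - s) ^ 2) / 2 := by
        linear_combination (-(1 - s) ^ 2 / 2) * hc2
      have hb' : b = -(c * (1 - a)) := by linarith
      have : 0 < (1 + s) ^ 2 + c ^ 2 * (1 - s) ^ 2 := by positivity
      rw [hq', hb']
      field_simp
      ring
    have hi' : IntegrableOn (fun s : ℝ => (1 - s) ^ (β - 1) * s *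
        (-Real.cos t * (1 + s) - Real.sin t * c * (1 - s)) /
          ((1 + s) ^ 2 + c ^ 2 * (1 - s) ^ 2)) (Ioo 0 1) :=
      (integrable_const_mul_iff (IsUnit.mk0 _ two_ne_zero) _).1
        ((integrableOn_congr_fun hpt' measurableSet_Ioo).1 hi)
    rw [setIntegral_congr_fun measurableSet_Ioo hpt', integral_const_mul]
    exact mul_nonneg two_pos.le
      (integral_Ioo_sector_nonneg hβ0 hβ1 hAB (by linarith) hsin hc0 hi')

/-- The Herglotz representation of a function with `Ψ 0 = 1`, written with the Cauchy kernel. -/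
theorem eq_circleAverage_cauchy_kernel {Ψ : ℂ → ℂ} (hΨ : DiffContOnCl ℂ Ψ (Metric.ball 0 1))
    (hΨ0 : Ψ 0 = 1) {w : ℂ} (hw : ‖w‖ < 1) :
    Ψ w = Real.circleAverage (fun ζ => ((2 * (Ψ ζ).re - 1 : ℝ) : ℂ) * (ζ / (ζ - w))) 0 1 := by
  have hball : w ∈ Metric.ball (0 : ℂ) |1| := by simpa using hw
  have hΨ' : DiffContOnCl ℂ Ψ (Metric.ball 0 |1|) := by simpa using hΨ
  have hne : ∀ ζ ∈ Metric.sphere (0 : ℂ) 1, ζ - w ≠ 0 := by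
    intro ζ hζ h
    rw [sub_eq_zero.1 h] at hζ
    exact hw.ne (by simpa using hζ)
  have hne' : ∀ ζ ∈ Metric.closedBall (0 : ℂ) 1, 1 - (starRingEnd ℂ) w * ζ ≠ 0 := by
    intro ζ hζ h
    have h1 : ‖(starRingEnd ℂ) w * ζ‖ = 1 := by
      rw [← sub_eq_zero.1 h, norm_one]
    rw [norm_mul, RCLike.norm_conj] at h1
    have h2 : ‖ζ‖ ≤ 1 := by simpa using hζ
    nlinarith [norm_nonneg w, norm_nonneg ζ]
  have hcont : ContinuousOn Ψ (Metric.sphere 0 1) :=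
    hΨ.2.mono (Metric.sphere_subset_closedBall.trans_eq (closure_ball 0 one_ne_zero).symm)
  have h1 := hΨ'.circleAverage_smul_div hball
  have h2 := (diffContOnCl_const (c := (1 : ℂ)) (s := Metric.ball (0 : ℂ) |1|)
    (𝕜 := ℂ)).circleAverage_smul_div hball
  have h3 : Real.circleAverage (fun ζ => Ψ ζ / (1 - (starRingEnd ℂ) w * ζ)) 0 1 = 1 := by
    have hd : DiffContOnCl ℂ (fun ζ => (1 - (starRingEnd ℂ) w * ζ)⁻¹ • Ψ ζ)
        (Metric.ball 0 |1|) := by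
      refine DiffContOnCl.smul (DifferentiableOn.diffContOnCl ?_) hΨ'
      rw [abs_one, closure_ball 0 one_ne_zero]
      exact DifferentiableOn.inv (by fun_prop) hne'
    have h := hd.circleAverage
    simp only [mul_zero, sub_zero, inv_one, hΨ0, smul_eq_mul, mul_one] at h
    simpa only [div_eq_inv_mul] using h
  have h4 : Real.circleAverage (fun ζ => (starRingEnd ℂ) (Ψ ζ) * (ζ / (ζ - w))) 0 1 = 1 := by
    have hci : CircleIntegrable (fun ζ => Ψ ζ / (1 - (starRingEnd ℂ) w * ζ)) 0 1 := by
      refine ContinuousOn.circleIntegrable zero_le_one (hcont.div (by fun_prop) fun ζ hζ => ?_)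
      exact hne' ζ (Metric.sphere_subset_closedBall hζ)
    have h := (Complex.conjCLE.toContinuousLinearMap).circleAverage_comp_comm hci
    rw [h3] at h
    have h' : Real.circleAverage (fun ζ => (starRingEnd ℂ) (Ψ ζ) * (ζ / (ζ - w))) 0 1 =
        Real.circleAverage (Complex.conjCLE.toContinuousLinearMap ∘
          fun ζ => Ψ ζ / (1 - (starRingEnd ℂ) w * ζ)) 0 1 := by
      refine Real.circleAverage_congr_sphere fun ζ hζ => ?_
      rw [abs_one] at hζ
      have hζ1 : (starRingEnd ℂ) ζ * ζ = 1 := by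
        rw [← Complex.normSq_eq_conj_mul_self, Complex.normSq_eq_norm_sq]
        have : ‖ζ‖ = 1 := by simpa using hζ
        simp [this]
      have hζ0 : ζ ≠ 0 := right_ne_zero_of_mul_eq_one hζ1
      have hc : (starRingEnd ℂ) ζ = ζ⁻¹ := eq_inv_of_mul_eq_one_left hζ1
      have hs := hne ζ hζ
      simp only [Function.comp_apply, ContinuousLinearEquiv.coe_coe, Complex.conjCLE_apply,
        map_div₀, map_sub, map_mul, map_one, Complex.conj_conj, hc]
      field_simp
    rw [h', h]
    simp
  have hfield : ∀ ζ, ((2 * (Ψ ζ).re - 1 : ℝ) : ℂ) * (ζ / (ζ - w)) =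
      (((ζ - 0) / (ζ - w)) • Ψ ζ + (starRingEnd ℂ) (Ψ ζ) * (ζ / (ζ - w))) -
        ((ζ - 0) / (ζ - w)) • (1 : ℂ) := by
    intro ζ
    have : ((2 * (Ψ ζ).re - 1 : ℝ) : ℂ) = Ψ ζ + (starRingEnd ℂ) (Ψ ζ) - 1 := by
      rw [Complex.add_conj]; push_cast; ring
    rw [this]
    simp only [smul_eq_mul, sub_zero]
    ring
  have hk : ContinuousOn (fun ζ : ℂ => ζ / (ζ - w)) (Metric.sphere 0 1) :=
    ContinuousOn.div (by fun_prop) (by fun_prop) hne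
  have c1 : CircleIntegrable (fun ζ => ((ζ - 0) / (ζ - w)) • Ψ ζ) 0 1 := by
    simp only [sub_zero]
    exact (hk.smul hcont).circleIntegrable zero_le_one
  have c2 : CircleIntegrable (fun ζ => (starRingEnd ℂ) (Ψ ζ) * (ζ / (ζ - w))) 0 1 :=
    ((Complex.continuous_conj.comp_continuousOn hcont).mul hk).circleIntegrable zero_le_one
  have c3 : CircleIntegrable (fun ζ : ℂ => ((ζ - 0) / (ζ - w)) • (1 : ℂ)) 0 1 := by
    simp only [sub_zero]
    exact (hk.smul continuousOn_const).circleIntegrable zero_le_one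
  simp only [hfield]
  have c12 : CircleIntegrable (fun ζ => ((ζ - 0) / (ζ - w)) • Ψ ζ +
      (starRingEnd ℂ) (Ψ ζ) * (ζ / (ζ - w))) 0 1 := c1.add c2
  rw [Real.circleAverage_fun_sub c12 c3, Real.circleAverage_fun_add c1 c2, h1, h2, h4]
  ring

theorem cos_div_le_integral_of_re_ge {β t : ℝ} (hβ0 : 0 < β) (hβ1 : β < 1)
    (ht0 : Real.pi / 2 + Real.pi * β / 2 ≤ t) (ht1 : t ≤ Real.pi)
    {Ψ : ℂ → ℂ} (hΨ : DiffContOnCl ℂ Ψ (Metric.ball 0 1)) (hΨ0 : Ψ 0 = 1)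
    (hre : ∀ ζ, ‖ζ‖ = 1 → 1 / 2 ≤ (Ψ ζ).re) :
    Real.cos t / β ≤ ∫ s in Ioo (0 : ℝ) 1,
      (1 - s) ^ β * (Complex.exp (t * Complex.I) * Ψ s).re := by
  have hpi := Real.pi_pos
  set e := Complex.exp (t * Complex.I) with he
  have hcontS : ContinuousOn Ψ (Metric.sphere 0 1) :=
    hΨ.2.mono (Metric.sphere_subset_closedBall.trans_eq (closure_ball 0 one_ne_zero).symm)
  have hnorm : ∀ θ, ‖circleMap 0 1 θ‖ = 1 := fun θ => by simp
  have hcont : Continuous fun θ : ℝ => Ψ (circleMap 0 1 θ) :=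
    hcontS.comp_continuous (continuous_circleMap 0 1) fun θ => by simp
  set μ : ℝ → ℝ := fun θ => 2 * (Ψ (circleMap 0 1 θ)).re - 1 with hμ
  have hμc : Continuous μ := by
    have := Complex.continuous_re.comp hcont
    fun_prop
  have hμ0 : ∀ θ, 0 ≤ μ θ := fun θ => by
    have := hre _ (hnorm θ)
    simp only [hμ]
    linarith
  have hrep : ∀ w : ℂ, ‖w‖ < 1 → (e * Ψ w).re = (2 * Real.pi)⁻¹ * ∫ θ in Ioc 0 (2 * Real.pi),
      μ θ * (e * (circleMap 0 1 θ / (circleMap 0 1 θ - w))).re := by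
    intro w hw
    have hne : ∀ θ, circleMap 0 1 θ - w ≠ 0 := by
      intro θ h
      rw [← sub_eq_zero.1 h, hnorm] at hw
      exact lt_irrefl _ hw
    have hint : IntegrableOn (fun θ => e * (((μ θ : ℝ) : ℂ) *
        (circleMap 0 1 θ / (circleMap 0 1 θ - w)))) (Ioc 0 (2 * Real.pi)) := by
      refine Continuous.integrableOn_Ioc ?_
      exact continuous_const.mul ((Complex.continuous_ofReal.comp hμc).mul
        ((continuous_circleMap 0 1).div ((continuous_circleMap 0 1).sub continuous_const) hne))
    rw [eq_circleAverage_cauchy_kernel hΨ hΨ0 hw, Real.circleAverage_def,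
      intervalIntegral.integral_of_le (by positivity), Complex.real_smul, mul_left_comm,
      Complex.re_ofReal_mul, ← integral_const_mul]
    have h := integral_re hint
    simp only [RCLike.re_eq_complex_re] at h
    rw [← h]
    congr 1
    refine integral_congr_ae (Eventually.of_forall fun θ => ?_)
    simp only [hμ]
    rw [mul_left_comm, Complex.re_ofReal_mul]
  obtain ⟨C, hC⟩ : ∃ C, ∀ θ, μ θ ≤ C := by
    obtain ⟨C, hC⟩ := (isCompact_sphere (0 : ℂ) 1).exists_bound_of_continuousOn hcontS
    refine ⟨2 * C - 1, fun θ => ?_⟩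
    have := (Complex.re_le_norm _).trans (hC (circleMap 0 1 θ) (by simp))
    simp only [hμ]
    linarith
  have hC0 : 0 ≤ C := (hμ0 0).trans (hC 0)
  have hμ1 : (2 * Real.pi)⁻¹ * ∫ θ in Ioc 0 (2 * Real.pi), μ θ = 1 := by
    have h := eq_circleAverage_cauchy_kernel hΨ hΨ0 (w := 0) (by simp)
    rw [hΨ0, Real.circleAverage_def, intervalIntegral.integral_of_le (by positivity)] at h
    have h' : ∀ θ, ((2 * (Ψ (circleMap 0 1 θ)).re - 1 : ℝ) : ℂ) *
        (circleMap 0 1 θ / (circleMap 0 1 θ - 0)) = ((μ θ : ℝ) : ℂ) := by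
      intro θ
      rw [sub_zero, div_self (by simp), mul_one]
    simp only [h'] at h
    rw [integral_complex_ofReal, Complex.real_smul, ← Complex.ofReal_mul] at h
    exact_mod_cast h.symm
  have hbd : Integrable (Function.uncurry fun (s θ : ℝ) => (1 - s) ^ β *
      (μ θ * (e * (circleMap 0 1 θ / (circleMap 0 1 θ - s))).re))
      ((volume.restrict (Ioo 0 1)).prod (volume.restrict (Ioc 0 (2 * Real.pi)))) := by
    have hdom : Integrable (fun p : ℝ × ℝ => (1 - p.1) ^ (β - 1) * C)
        ((volume.restrict (Ioo 0 1)).prod (volume.restrict (Ioc 0 (2 * Real.pi)))) :=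
      (integrableOn_one_sub_rpow hβ0).mul_prod (integrable_const C)
    refine hdom.mono' ?_ ?_
    · have m1 := hμc.measurable
      have m2 := (continuous_circleMap 0 1).measurable
      refine Measurable.aestronglyMeasurable ?_
      unfold Function.uncurry
      fun_prop
    · rw [Measure.prod_restrict]
      refine (ae_restrict_iff' (measurableSet_Ioo.prod measurableSet_Ioc)).2
        (Eventually.of_forall fun p hp => ?_)
      obtain ⟨s, θ⟩ := p
      have hs : s ∈ Ioo (0 : ℝ) 1 := hp.1
      have h1 : 0 < 1 - s := by linarith [hs.2]
      have h2 : ‖(e * (circleMap 0 1 θ / (circleMap 0 1 θ - s))).re‖ ≤ (1 - s)⁻¹ := by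
        refine (Complex.abs_re_le_norm _).trans ?_
        rw [norm_mul, he, Complex.norm_exp_ofReal_mul_I, one_mul]
        exact norm_div_sub_ofReal_le (hnorm θ) hs.2 hs.1
      simp only [Function.uncurry]
      rw [norm_mul, norm_mul, Real.norm_of_nonneg (by positivity), Real.norm_of_nonneg (hμ0 θ),
        Real.rpow_sub_one h1.ne']
      calc (1 - s) ^ β * (μ θ * ‖(e * (circleMap 0 1 θ / (circleMap 0 1 θ - s))).re‖)
          ≤ (1 - s) ^ β * (C * (1 - s)⁻¹) := by
            gcongr
            exact hC θ
        _ = (1 - s) ^ β / (1 - s) * C := by ring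
  have hswap := integral_integral_swap hbd
  have hL : ∫ s in Ioo (0 : ℝ) 1, (1 - s) ^ β * (e * Ψ s).re = (2 * Real.pi)⁻¹ *
      ∫ s in Ioo (0 : ℝ) 1, ∫ θ in Ioc 0 (2 * Real.pi), (1 - s) ^ β *
        (μ θ * (e * (circleMap 0 1 θ / (circleMap 0 1 θ - s))).re) := by
    rw [← integral_const_mul]
    refine setIntegral_congr_fun measurableSet_Ioo fun s hs => ?_
    rw [hrep s (by rw [Complex.norm_real, Real.norm_of_nonneg hs.1.le]; exact hs.2),
      integral_const_mul]
    ring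
  rw [hL, hswap]
  have hpt : ∀ θ ∈ Ioo 0 (2 * Real.pi), μ θ * (Real.cos t / β) ≤ ∫ s in Ioo (0 : ℝ) 1,
      (1 - s) ^ β * (μ θ * (e * (circleMap 0 1 θ / (circleMap 0 1 θ - s))).re) := by
    intro θ hθ
    have hne : circleMap 0 1 θ ≠ 1 := by
      intro h
      have h1 := congrArg Complex.re h
      simp only [circleMap, Complex.ofReal_one, one_mul, zero_add, Complex.exp_ofReal_mul_I_re,
        Complex.one_re] at h1
      exact hθ.1.ne' ((Real.cos_eq_one_iff_of_lt_of_lt (by linarith [hθ.1]) hθ.2).1 h1)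
    have h := mul_le_mul_of_nonneg_left
      (cos_div_le_integral_cauchy_kernel hβ0 hβ1 ht0 ht1 (hnorm θ) hne) (hμ0 θ)
    rw [← integral_const_mul] at h
    refine h.trans_eq (integral_congr_ae (Eventually.of_forall fun s => ?_))
    simp only
    ring
  have hmono := setIntegral_mono_on (s := Ioo 0 (2 * Real.pi))
    (((hμc.integrableOn_Ioc).mono_set Ioo_subset_Ioc_self).mul_const _)
    (hbd.integral_prod_right.mono_measure (Measure.restrict_mono Ioo_subset_Ioc_self le_rfl))
    measurableSet_Ioo hpt
  rw [integral_mul_const, ← integral_Ioc_eq_integral_Ioo, ← integral_Ioc_eq_integral_Ioo] at hmono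
  calc Real.cos t / β = (2 * Real.pi)⁻¹ *
        ((∫ θ in Ioc 0 (2 * Real.pi), μ θ) * (Real.cos t / β)) := by
        rw [← mul_assoc, hμ1, one_mul]
    _ ≤ _ := mul_le_mul_of_nonneg_left hmono (by positivity)

/-- **Jack's lemma**: at a point where `‖w‖` is maximal over the closed disk through that point,
`z * w' z` is a real multiple of `w z`, with factor at least one. -/
theorem exists_one_le_mul_deriv_eq_of_isMaxOn {w : ℂ → ℂ} {z₀ : ℂ}
    (hd : DifferentiableOn ℂ w (Metric.ball 0 1)) (hw0 : w 0 = 0) (hz₀ : ‖z₀‖ < 1)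
    (hne : w z₀ ≠ 0) (hmax : ∀ z, ‖z‖ ≤ ‖z₀‖ → ‖w z‖ ≤ ‖w z₀‖) :
    ∃ m : ℝ, 1 ≤ m ∧ z₀ * deriv w z₀ = m * w z₀ := by
  have hz0 : 0 < ‖z₀‖ := norm_pos_iff.2 fun h => hne (by rw [h, hw0])
  have hM : 0 < ‖w z₀‖ := norm_pos_iff.2 hne
  have hderiv : HasDerivAt w (deriv w z₀) z₀ :=
    (hd.differentiableAt (Metric.isOpen_ball.mem_nhds (by simpa using hz₀))).hasDerivAt
  have hschwarz : ∀ s : ℝ, 0 < s → s < 1 → ‖w (s * z₀)‖ ≤ s * ‖w z₀‖ := by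
    intro s hs0 hs1
    have hsz : ‖(s : ℂ) * z₀‖ = s * ‖z₀‖ := by
      rw [norm_mul, Complex.norm_real, Real.norm_of_nonneg hs0.le]
    have h := Complex.dist_le_div_mul_dist_of_mapsTo_ball (f := w) (c := 0) (R₁ := ‖z₀‖)
      (R₂ := ‖w z₀‖) (z := s * z₀) (hd.mono (Metric.ball_subset_ball hz₀.le))
      (fun z hz => by
        rw [mem_ball_zero_iff] at hz
        rw [hw0, mem_closedBall_zero_iff]
        exact hmax z hz.le)
      (by
        rw [mem_ball_zero_iff, hsz]
        nlinarith)
    rw [hw0, dist_zero_right, dist_zero_right, hsz] at h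
    refine h.trans_eq ?_
    field_simp
  have hinner : ∀ a b : ℂ, inner ℝ a b = (b * (starRingEnd ℂ) a).re := fun a b => by
    rw [Complex.inner]
  set p := z₀ * deriv w z₀ * (starRingEnd ℂ) (w z₀) with hp
  have him : p.im = 0 := by
    have h1 : HasDerivAt (fun ζ : ℂ => w (Complex.exp (ζ * Complex.I) * z₀))
        (deriv w z₀ * (Complex.I * z₀)) ((0 : ℝ) : ℂ) := by
      have h2 : HasDerivAt (fun ζ : ℂ => Complex.exp (ζ * Complex.I) * z₀) (Complex.I * z₀)
          ((0 : ℝ) : ℂ) := by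
        have := (((hasDerivAt_id ((0 : ℝ) : ℂ)).mul_const Complex.I).cexp).mul_const z₀
        simpa using this
      refine HasDerivAt.comp _ ?_ h2
      simpa using hderiv
    have h3 := h1.comp_ofReal.norm_sq
    have hloc : IsLocalMax (fun θ : ℝ => ‖w (Complex.exp (θ * Complex.I) * z₀)‖ ^ 2) 0 := by
      refine Eventually.of_forall fun θ => ?_
      simp only [Complex.ofReal_zero, zero_mul, Complex.exp_zero, one_mul]
      gcongr
      refine hmax _ ?_
      rw [norm_mul, Complex.norm_exp_ofReal_mul_I, one_mul]
    have h4 := hloc.hasDerivAt_eq_zero h3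
    simp only [Complex.ofReal_zero, zero_mul, Complex.exp_zero, one_mul, hinner] at h4
    have h5 : deriv w z₀ * (Complex.I * z₀) * (starRingEnd ℂ) (w z₀) = Complex.I * p := by
      rw [hp]; ring
    rw [h5] at h4
    simpa using h4
  have hre : ‖w z₀‖ ^ 2 ≤ p.re := by
    have h1 : HasDerivAt (fun ζ : ℂ => w (ζ * z₀)) (deriv w z₀ * z₀) ((1 : ℝ) : ℂ) := by
      have h2 : HasDerivAt (fun ζ : ℂ => ζ * z₀) z₀ ((1 : ℝ) : ℂ) := by
        simpa using (hasDerivAt_id ((1 : ℝ) : ℂ)).mul_const z₀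
      refine HasDerivAt.comp _ ?_ h2
      simpa using hderiv
    have h3 := h1.comp_ofReal.norm_sq.sub (((hasDerivAt_id (1 : ℝ)).pow 2).mul_const (‖w z₀‖ ^ 2))
    have h4 := (hasDerivAt_iff_tendsto_slope_left_right.1 h3).1
    have h5 := ge_of_tendsto (b := 0) h4 (by
      filter_upwards [Ioo_mem_nhdsLT (zero_lt_one' ℝ)] with s hs
      have h6 := hschwarz s hs.1 hs.2
      have h7 : ‖w (s * z₀)‖ ^ 2 ≤ (s * ‖w z₀‖) ^ 2 := by gcongr
      rw [slope_def_field]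
      refine div_nonneg_of_nonpos ?_ (by linarith [hs.2])
      simp
      linarith)
    simp only [Complex.ofReal_one, one_mul, hinner] at h5
    have h8 : deriv w z₀ * z₀ * (starRingEnd ℂ) (w z₀) = p := by
      rw [hp]; ring
    rw [h8] at h5
    simp at h5
    linarith
  refine ⟨p.re / ‖w z₀‖ ^ 2, (one_le_div (by positivity)).2 hre, ?_⟩
  have hpre : ((p.re : ℝ) : ℂ) = p := Complex.ext (by simp) (by simp [him])
  have hconj : (starRingEnd ℂ) (w z₀) ≠ 0 := by simpa using hne
  push_cast
  rw [hpre, ← Complex.conj_mul', hp]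
  field_simp

theorem half_le_re_div_one_sub {w : ℂ} {m : ℝ} (hm : 1 ≤ m) (hw : 1 ≤ ‖w‖) (hw1 : 1 - w ≠ 0) :
    1 / 2 ≤ (-(m * w) / (1 - w)).re := by
  have hpos : 0 < Complex.normSq (1 - w) := Complex.normSq_pos.2 hw1
  have hsq : 1 ≤ w.re * w.re + w.im * w.im := by
    rw [← Complex.normSq_apply, Complex.normSq_eq_norm_sq]
    nlinarith
  have h : (-(m * w) / (1 - w)).re =
      m * (w.re * w.re + w.im * w.im - w.re) / Complex.normSq (1 - w) := by
    rw [Complex.div_re]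
    simp
    ring
  rw [h, div_le_div_iff₀ two_pos hpos, Complex.normSq_apply]
  simp only [Complex.sub_re, Complex.one_re, Complex.sub_im, Complex.one_im]
  have h1 : 0 ≤ w.re * w.re + w.im * w.im - w.re := by
    nlinarith [sq_nonneg (w.re - 1), sq_nonneg w.im]
  nlinarith [mul_le_mul_of_nonneg_right hm h1]

theorem norm_one_sub_lt_one_of_re_logDeriv_lt {v : ℂ → ℂ}
    (hd : DifferentiableOn ℂ v (Metric.ball 0 1)) (hv0 : v 0 = 1)
    (hne : ∀ z, ‖z‖ < 1 → v z ≠ 0)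
    (hre : ∀ z, ‖z‖ < 1 → (z * deriv v z / v z).re < 1 / 2) {z : ℂ} (hz : ‖z‖ < 1) :
    ‖1 - v z‖ < 1 := by
  by_contra! hcon
  set w : ℂ → ℂ := fun z => 1 - v z with hw
  have hwd : DifferentiableOn ℂ w (Metric.ball 0 1) := (differentiableOn_const 1).sub hd
  obtain ⟨z₁, hz₁, hmax⟩ := (isCompact_closedBall (0 : ℂ) ‖z‖).exists_isMaxOn
    ⟨0, by simp⟩ ((hwd.continuousOn.mono (Metric.closedBall_subset_ball hz)).norm)
  rw [mem_closedBall_zero_iff] at hz₁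
  have hz₁' := hz₁.trans_lt hz
  have h1 : 1 ≤ ‖w z₁‖ := hcon.trans (hmax (by simp))
  obtain ⟨m, hm, heq⟩ := exists_one_le_mul_deriv_eq_of_isMaxOn hwd (by simp [hw, hv0]) hz₁'
    (norm_pos_iff.1 (by linarith))
    (fun y hy => hmax (by simpa using hy.trans hz₁))
  have h2 : deriv w z₁ = -deriv v z₁ := by simp [hw]
  have h3 : 1 - w z₁ = v z₁ := by simp [hw]
  have h4 := half_le_re_div_one_sub hm h1 (by rw [h3]; exact hne z₁ hz₁')
  rw [← heq, h2, h3, mul_neg, neg_neg] at h4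
  exact absurd (hre z₁ hz₁') (not_lt.2 h4)

theorem half_lt_re_inv {v : ℂ} (hv : v ≠ 0) (h : ‖1 - v‖ < 1) : 1 / 2 < (v⁻¹).re := by
  have hpos : 0 < Complex.normSq v := Complex.normSq_pos.2 hv
  have hsq : ‖1 - v‖ ^ 2 < 1 := by nlinarith [norm_nonneg (1 - v)]
  rw [← Complex.normSq_eq_norm_sq, Complex.normSq_apply] at hsq
  rw [Complex.inv_re, lt_div_iff₀ hpos, Complex.normSq_apply]
  simp only [Complex.sub_re, Complex.one_re, Complex.sub_im, Complex.one_im] at hsq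
  nlinarith

theorem one_sub_mem_slitPlane {z : ℂ} (hz : ‖z‖ < 1) : 1 - z ∈ Complex.slitPlane := by
  left
  have := (Complex.re_le_norm z).trans_lt hz
  simpa using this

theorem neg_half_lt_re_div_one_sub {z : ℂ} (hz : ‖z‖ < 1) : -(1 / 2) < (z / (1 - z)).re := by
  have hpos : 0 < Complex.normSq (1 - z) :=
    Complex.normSq_pos.2 (Complex.slitPlane_ne_zero (one_sub_mem_slitPlane hz))
  have hsq : ‖z‖ ^ 2 < 1 := by nlinarith [norm_nonneg z]
  rw [← Complex.normSq_eq_norm_sq, Complex.normSq_apply] at hsq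
  have h : (z / (1 - z)).re =
      (z.re - (z.re * z.re + z.im * z.im)) / Complex.normSq (1 - z) := by
    rw [Complex.div_re]
    simp
    ring
  rw [h, lt_div_iff₀ hpos, Complex.normSq_apply]
  simp only [Complex.sub_re, Complex.one_re, Complex.sub_im, Complex.one_im]
  nlinarith

/-- A subordination-type bound for the derivative of a convex function of order `α`, obtained from
Jack's lemma. -/
theorem IsConvexOfOrder.half_lt_re {α : ℝ} (hα : 1 / 2 < α) {f : ℂ → ℂ}
    (hf : IsConvexOfOrder α f) {z₀ z : ℂ} (hz₀ : ‖z₀‖ < 1) (hz : ‖z‖ < 1) :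
    1 / 2 < (deriv f (z₀ * z) / (1 - z) ^ ((2 * α - 1 : ℝ) : ℂ)).re := by
  obtain ⟨hd, -, hf1, hconv⟩ := hf
  have hmem : ∀ z, ‖z‖ < 1 → z₀ * z ∈ unitDisk := fun z hz => by
    rw [unitDisk, mem_ball_zero_iff, norm_mul]
    nlinarith [norm_nonneg z, norm_nonneg z₀]
  have hd' : DifferentiableOn ℂ (deriv f) unitDisk := hd.deriv Metric.isOpen_ball
  set c : ℂ := ((2 * α - 1 : ℝ) : ℂ) with hc
  set v : ℂ → ℂ := fun z => (1 - z) ^ c / deriv f (z₀ * z) with hv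
  have hpow : ∀ z : ℂ, ‖z‖ < 1 → (1 - z) ^ c ≠ 0 := fun z hz => by
    rw [Complex.cpow_ne_zero_iff]
    exact Or.inl (Complex.slitPlane_ne_zero (one_sub_mem_slitPlane hz))
  have hne : ∀ z, ‖z‖ < 1 → v z ≠ 0 := fun z hz =>
    div_ne_zero (hpow z hz) (hconv _ (hmem z hz)).1
  have hderiv : ∀ z, ‖z‖ < 1 → HasDerivAt v
      ((c * (1 - z) ^ (c - 1) * (-1) * deriv f (z₀ * z) -
        (1 - z) ^ c * (deriv (deriv f) (z₀ * z) * z₀)) / deriv f (z₀ * z) ^ 2) z := by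
    intro z hz
    have h1 : HasDerivAt (fun z : ℂ => (1 - z) ^ c) (c * (1 - z) ^ (c - 1) * (-1)) z :=
      ((hasDerivAt_id z).const_sub 1).cpow_const (one_sub_mem_slitPlane hz)
    have h2 : HasDerivAt (fun z : ℂ => deriv f (z₀ * z)) (deriv (deriv f) (z₀ * z) * z₀) z := by
      refine HasDerivAt.comp z (hd'.differentiableAt
        (Metric.isOpen_ball.mem_nhds (hmem z hz))).hasDerivAt ?_
      simpa using (hasDerivAt_id z).const_mul z₀
    exact h1.div h2 (hconv _ (hmem z hz)).1
  have hvd : DifferentiableOn ℂ v (Metric.ball 0 1) := fun z hz =>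
    (hderiv z (by simpa using hz)).differentiableAt.differentiableWithinAt
  have hre : ∀ z, ‖z‖ < 1 → (z * deriv v z / v z).re < 1 / 2 := by
    intro z hz
    have hg := (hconv _ (hmem z hz)).1
    have h1 : 1 - z ≠ 0 := Complex.slitPlane_ne_zero (one_sub_mem_slitPlane hz)
    have hp := hpow z hz
    have heq : z * deriv v z / v z = -(c * (z / (1 - z))) -
        z₀ * z * deriv (deriv f) (z₀ * z) / deriv f (z₀ * z) := by
      rw [(hderiv z hz).deriv, hv, Complex.cpow_sub _ _ h1, Complex.cpow_one]
      simp only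
      generalize deriv f (z₀ * z) = g at hg ⊢
      field_simp
    rw [heq, Complex.sub_re, Complex.neg_re, hc, Complex.re_ofReal_mul]
    have h2 := (hconv _ (hmem z hz)).2
    rw [Complex.add_re, Complex.one_re] at h2
    nlinarith [neg_half_lt_re_div_one_sub hz]
  have hlt := norm_one_sub_lt_one_of_re_logDeriv_lt hvd (by simp [hv, hf1]) hne hre hz
  have h := half_lt_re_inv (hne z hz) hlt
  rwa [hv, inv_div] at h

theorem IsConvexOfOrder.cos_div_le_integral {α t : ℝ} (hα0 : 1 / 2 < α) (hα1 : α < 1)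
    (ht0 : α * Real.pi ≤ t) (ht1 : t ≤ Real.pi) {f : ℂ → ℂ} (hf : IsConvexOfOrder α f)
    {z₀ : ℂ} (hz₀ : ‖z₀‖ < 1) :
    Real.cos t / (2 * α - 1) ≤ ∫ s in Ioo (0 : ℝ) 1,
      (Complex.exp (t * Complex.I) * deriv f (z₀ * s)).re := by
  obtain ⟨hd, -, hf1, hconv⟩ := id hf
  set β := 2 * α - 1 with hβ
  have hβ0 : 0 < β := by linarith
  set e := Complex.exp (t * Complex.I) with he
  set Ψ : ℂ → ℂ := fun z => deriv f (z₀ * z) / (1 - z) ^ (β : ℂ) with hΨ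
  have hd' : DifferentiableOn ℂ (deriv f) unitDisk := hd.deriv Metric.isOpen_ball
  have hgd : DifferentiableOn ℂ (fun z => deriv f (z₀ * z)) (Metric.closedBall 0 1) := by
    refine hd'.comp (by fun_prop) fun z hz => ?_
    rw [mem_closedBall_zero_iff] at hz
    rw [unitDisk, mem_ball_zero_iff, norm_mul]
    nlinarith [norm_nonneg z, norm_nonneg z₀]
  have hΨd : DifferentiableOn ℂ Ψ (Metric.ball 0 1) := by
    refine (hgd.mono Metric.ball_subset_closedBall).div ?_ ?_
    · intro z hz
      exact (((differentiableAt_id).const_sub 1).cpow_const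
        (one_sub_mem_slitPlane (by simpa using hz))).differentiableWithinAt
    · intro z hz
      rw [Complex.cpow_ne_zero_iff]
      exact Or.inl (Complex.slitPlane_ne_zero (one_sub_mem_slitPlane (by simpa using hz)))
  obtain ⟨C, hC⟩ := (isCompact_closedBall (0 : ℂ) 1).exists_bound_of_continuousOn hgd.continuousOn
  have hball : ∀ ρ ∈ Ioo (0 : ℝ) 1, MapsTo (fun z : ℂ => (ρ : ℂ) * z) (Metric.closedBall 0 1)
      (Metric.ball 0 1) := by
    intro ρ hρ z hz
    rw [mem_closedBall_zero_iff] at hz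
    rw [mem_ball_zero_iff, norm_mul, Complex.norm_real, Real.norm_of_nonneg hρ.1.le]
    nlinarith [hρ.1, hρ.2]
  have hle : ∀ ρ ∈ Ioo (0 : ℝ) 1, Real.cos t / β ≤
      ∫ s in Ioo (0 : ℝ) 1, (1 - s) ^ β * (e * Ψ (ρ * s)).re := by
    intro ρ hρ
    refine cos_div_le_integral_of_re_ge (Ψ := fun z => Ψ (ρ * z)) hβ0 (by linarith) ?_ ht1 ?_ ?_ ?_
    · rw [hβ]
      linarith
    · refine DifferentiableOn.diffContOnCl ?_
      rw [closure_ball 0 one_ne_zero]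
      exact hΨd.comp (by fun_prop) (hball ρ hρ)
    · simp [hΨ, hf1]
    · intro ζ hζ
      refine (hf.half_lt_re hα0 hz₀ ?_).le
      simpa using hball ρ hρ (mem_closedBall_zero_iff.2 hζ.le)
  have hmemball : ∀ s ∈ Ioo (0 : ℝ) 1, (s : ℂ) ∈ Metric.ball (0 : ℂ) 1 := fun s hs => by
    rw [mem_ball_zero_iff, Complex.norm_real, Real.norm_of_nonneg hs.1.le]
    exact hs.2
  have hmul : ∀ ρ ∈ Ioo (0 : ℝ) 1, ∀ s ∈ Ioo (0 : ℝ) 1, (ρ : ℂ) * s ∈ Metric.ball (0 : ℂ) 1 :=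
    fun ρ hρ s hs => hball ρ hρ (Metric.ball_subset_closedBall (hmemball s hs))
  have hlim : Tendsto (fun ρ : ℝ => ∫ s in Ioo (0 : ℝ) 1, (1 - s) ^ β * (e * Ψ (ρ * s)).re)
      (𝓝[<] 1) (𝓝 (∫ s in Ioo (0 : ℝ) 1, (e * deriv f (z₀ * s)).re)) := by
    refine tendsto_integral_filter_of_dominated_convergence (fun _ => C) ?_ ?_
      (integrable_const C) ?_
    · filter_upwards [Ioo_mem_nhdsLT (zero_lt_one' ℝ)] with ρ hρ
      refine ContinuousOn.aestronglyMeasurable ?_ measurableSet_Ioo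
      refine ContinuousOn.mul ?_ ?_
      · exact ContinuousOn.rpow_const (by fun_prop) fun s _ => Or.inr hβ0.le
      · refine Complex.continuous_re.comp_continuousOn (continuousOn_const.mul ?_)
        exact hΨd.continuousOn.comp (by fun_prop) fun s hs => hmul ρ hρ s hs
    · filter_upwards [Ioo_mem_nhdsLT (zero_lt_one' ℝ)] with ρ hρ
      refine (ae_restrict_iff' measurableSet_Ioo).2 (Eventually.of_forall fun s hs => ?_)
      have hs1 : 0 < 1 - s := by linarith [hs.2]
      have hρs : 1 - s ≤ 1 - ρ * s := by nlinarith [hρ.2, hs.1]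
      have hcast : (1 - (ρ : ℂ) * s) = ((1 - ρ * s : ℝ) : ℂ) := by push_cast; ring
      have hn : ‖Ψ (ρ * s)‖ ≤ C / (1 - s) ^ β := by
        rw [hΨ, norm_div, hcast, Complex.norm_cpow_eq_rpow_re_of_pos (hs1.trans_le hρs),
          Complex.ofReal_re]
        have hC' := hC _ (Metric.ball_subset_closedBall (hmul ρ hρ s hs))
        have : 0 ≤ C := (norm_nonneg _).trans hC'
        gcongr
      have hre : ‖(e * Ψ (ρ * s)).re‖ ≤ C / (1 - s) ^ β := by
        refine (Complex.abs_re_le_norm _).trans ?_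
        rwa [norm_mul, he, Complex.norm_exp_ofReal_mul_I, one_mul]
      have hpos : 0 < (1 - s) ^ β := by positivity
      rw [norm_mul, Real.norm_of_nonneg hpos.le, mul_comm]
      exact (le_div_iff₀ hpos).1 hre
    · refine (ae_restrict_iff' measurableSet_Ioo).2 (Eventually.of_forall fun s hs => ?_)
      have hs1 : 0 < 1 - s := by linarith [hs.2]
      have hcast : (1 - (s : ℂ)) = ((1 - s : ℝ) : ℂ) := by push_cast; ring
      have hpos : (((1 - s) ^ β : ℝ) : ℂ) ≠ 0 := by
        exact_mod_cast (Real.rpow_pos_of_pos hs1 β).ne'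
      have hval : (e * deriv f (z₀ * s)).re = (1 - s) ^ β * (e * Ψ s).re := by
        rw [← Complex.re_ofReal_mul, hΨ]
        simp only
        rw [hcast, ← Complex.ofReal_cpow hs1.le]
        field_simp
      rw [hval]
      have hcts : Tendsto Ψ (𝓝 (s : ℂ)) (𝓝 (Ψ s)) :=
        (hΨd.differentiableAt (Metric.isOpen_ball.mem_nhds (hmemball s hs))).continuousAt
      have harg : Tendsto (fun ρ : ℝ => (ρ : ℂ) * s) (𝓝[<] 1) (𝓝 (s : ℂ)) := by
        have : Continuous fun ρ : ℝ => (ρ : ℂ) * s := by fun_prop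
        simpa using (this.tendsto 1).mono_left nhdsWithin_le_nhds
      exact ((Complex.continuous_re.tendsto _).comp
        ((hcts.comp harg).const_mul e)).const_mul _
  refine ge_of_tendsto hlim ?_
  filter_upwards [Ioo_mem_nhdsLT (zero_lt_one' ℝ)] with ρ hρ using hle ρ hρ

theorem integral_re_mul_deriv {f : ℂ → ℂ} (hd : DifferentiableOn ℂ f (Metric.ball 0 1))
    (hf0 : f 0 = 0) {z₀ : ℂ} (hz₀ : ‖z₀‖ < 1) (hne : z₀ ≠ 0) (e : ℂ) :
    ∫ s in Ioo (0 : ℝ) 1, (e * deriv f (z₀ * s)).re = (e * (f z₀ / z₀)).re := by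
  have hmem : ∀ s ∈ uIcc (0 : ℝ) 1, z₀ * (s : ℂ) ∈ Metric.ball (0 : ℂ) 1 := fun s hs => by
    rw [uIcc_of_le zero_le_one] at hs
    rw [mem_ball_zero_iff, norm_mul, Complex.norm_real, Real.norm_of_nonneg hs.1]
    nlinarith [norm_nonneg z₀, hs.1, hs.2]
  have hderiv : ∀ s ∈ uIcc (0 : ℝ) 1, HasDerivAt (fun s : ℝ => (e * (f (z₀ * s) / z₀)).re)
      (e * deriv f (z₀ * s)).re s := by
    intro s hs
    have h1 : HasDerivAt (fun z : ℂ => f (z₀ * z)) (deriv f (z₀ * s) * z₀) (s : ℂ) := by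
      refine HasDerivAt.comp (s : ℂ) (hd.differentiableAt
        (Metric.isOpen_ball.mem_nhds (hmem s hs))).hasDerivAt ?_
      simpa using (hasDerivAt_id (s : ℂ)).const_mul z₀
    have h2 := ((h1.div_const z₀).const_mul e).real_of_complex
    rwa [mul_div_cancel_right₀ _ hne] at h2
  have hcont : ContinuousOn (fun s : ℝ => (e * deriv f (z₀ * s)).re) (uIcc 0 1) :=
    Complex.continuous_re.comp_continuousOn (continuousOn_const.mul
      ((hd.deriv Metric.isOpen_ball).continuousOn.comp (by fun_prop) hmem))
  have h := intervalIntegral.integral_eq_sub_of_hasDerivAt hderiv hcont.intervalIntegrable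
  rw [intervalIntegral.integral_of_le zero_le_one, integral_Ioc_eq_integral_Ioo] at h
  simpa [hf0] using h

theorem isConvexOfOrder_kfun {α : ℝ} (hα0 : 1 / 2 < α) (hα1 : α < 1) :
    IsConvexOfOrder α (kfun α) := by
  have hk : kfun α = fun z : ℂ => ((1 - z) ^ ((2 * α - 1 : ℝ) : ℂ) - 1) /
      ((1 - 2 * α : ℝ) : ℂ) := by
    funext z
    rw [kfun, if_neg hα0.ne']
  set c : ℂ := ((2 * α - 1 : ℝ) : ℂ) with hc
  have hcneg : ((1 - 2 * α : ℝ) : ℂ) = -c := by rw [hc]; push_cast; ring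
  have hc0 : c ≠ 0 := by
    rw [hc]
    exact_mod_cast (by linarith : (0 : ℝ) < 2 * α - 1).ne'
  have hpow : ∀ (a : ℂ) {z : ℂ}, ‖z‖ < 1 →
      HasDerivAt (fun z : ℂ => (1 - z) ^ a) (a * (1 - z) ^ (a - 1) * (-1)) z := fun a z hz =>
    ((hasDerivAt_id z).const_sub 1).cpow_const (one_sub_mem_slitPlane hz)
  have hderiv : ∀ z : ℂ, ‖z‖ < 1 → HasDerivAt (kfun α) ((1 - z) ^ (c - 1)) z := by
    intro z hz
    rw [hk, hcneg]
    refine (((hpow c hz).sub_const 1).div_const (-c)).congr_deriv ?_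
    field_simp
  have hderiv2 : ∀ z : ℂ, ‖z‖ < 1 →
      deriv (deriv (kfun α)) z = (c - 1) * (1 - z) ^ (c - 1 - 1) * (-1) := by
    intro z hz
    refine HasDerivAt.deriv ((hpow (c - 1) hz).congr_of_eventuallyEq ?_)
    filter_upwards [Metric.isOpen_ball.mem_nhds (mem_ball_zero_iff.2 hz)] with y hy
    exact (hderiv y (by simpa using hy)).deriv
  refine ⟨fun z hz => (hderiv z
      (by simpa [unitDisk] using hz)).differentiableAt.differentiableWithinAt,
    by simp [hk], by rw [(hderiv 0 (by simp)).deriv]; simp, fun z hz => ?_⟩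
  have hz' : ‖z‖ < 1 := by simpa [unitDisk] using hz
  have h1 : 1 - z ≠ 0 := Complex.slitPlane_ne_zero (one_sub_mem_slitPlane hz')
  have hp : (1 - z) ^ (c - 1) ≠ 0 := by
    rw [Complex.cpow_ne_zero_iff]
    exact Or.inl h1
  rw [(hderiv z hz').deriv, hderiv2 z hz']
  refine ⟨hp, ?_⟩
  have heq : z * ((c - 1) * (1 - z) ^ (c - 1 - 1) * (-1)) / (1 - z) ^ (c - 1) =
      ((2 - 2 * α : ℝ) : ℂ) * (z / (1 - z)) := by
    have h2 : ((2 - 2 * α : ℝ) : ℂ) = 1 - c := by rw [hc]; push_cast; ring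
    rw [h2, Complex.cpow_sub (c - 1) _ h1, Complex.cpow_one]
    field_simp
    ring
  rw [heq, Complex.add_re, Complex.one_re, Complex.re_ofReal_mul]
  nlinarith [neg_half_lt_re_div_one_sub hz']

theorem tendsto_kfun_div {α : ℝ} (hα0 : 1 / 2 < α) :
    Tendsto (fun x : ℝ => kfun α x / x) (𝓝[<] 1) (𝓝 ((1 / (2 * α - 1) : ℝ) : ℂ)) := by
  have hβ0 : 0 < 2 * α - 1 := by linarith
  have hcont : ContinuousAt (fun x : ℝ => ((1 - x) ^ (2 * α - 1) - 1) / (1 - 2 * α) / x) 1 := by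
    have h : ContinuousAt (fun x : ℝ => (1 - x) ^ (2 * α - 1)) 1 :=
      ContinuousAt.rpow_const (by fun_prop) (Or.inr hβ0.le)
    exact ((h.sub continuousAt_const).div_const _).div continuousAt_id one_ne_zero
  have hlim := (Complex.continuous_ofReal.tendsto _).comp
    (hcont.tendsto.mono_left (nhdsWithin_le_nhds (s := Iio 1)))
  have hval : ((1 - 1 : ℝ) ^ (2 * α - 1) - 1) / (1 - 2 * α) / 1 = 1 / (2 * α - 1) := by
    rw [sub_self, Real.zero_rpow hβ0.ne', zero_sub, div_one, ← neg_sub (2 * α) 1, neg_div_neg_eq]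
  rw [hval] at hlim
  refine hlim.congr' ?_
  filter_upwards [self_mem_nhdsWithin] with x hx
  have hx1 : 0 ≤ 1 - x := by linarith [mem_Iio.1 hx]
  rw [kfun, if_neg hα0.ne', Function.comp_apply, Complex.ofReal_div, Complex.ofReal_div,
    Complex.ofReal_sub, Complex.ofReal_cpow hx1]
  push_cast
  rfl

/-- for `1/2 < α < 1` and `απ ≤ t ≤ π`,
`Q_α(t) = inf {Re(e^{it} f(z)/z) : f ∈ K(α), z ∈ 𝔻 \ {0}} = cos t/(2α-1)`. -/
theorem Q_large_alpha (α : ℝ) (hα0 : 1 / 2 < α) (hα1 : α < 1)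
    (t : ℝ) (ht0 : α * Real.pi ≤ t) (ht1 : t ≤ Real.pi) :
    sInf {x : ℝ | ∃ f : ℂ → ℂ, IsConvexOfOrder α f ∧
        ∃ z ∈ unitDisk, z ≠ 0 ∧
          x = (Complex.exp ((t : ℂ) * Complex.I) * (f z / z)).re}
      = Real.cos t / (2 * α - 1) := by
  have hmem : ∀ x ∈ Ioo (0 : ℝ) 1, (x : ℂ) ∈ unitDisk ∧ (x : ℂ) ≠ 0 := fun x hx => by
    refine ⟨?_, by exact_mod_cast hx.1.ne'⟩
    rw [unitDisk, mem_ball_zero_iff, Complex.norm_real, Real.norm_of_nonneg hx.1.le]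
    exact hx.2
  have hk := isConvexOfOrder_kfun hα0 hα1
  refine IsGLB.csInf_eq ⟨?_, ?_⟩ ?_
  · rintro x ⟨f, hf, z, hz, hz0, rfl⟩
    have hz' : ‖z‖ < 1 := by simpa [unitDisk] using hz
    rw [← integral_re_mul_deriv hf.1 hf.2.1 hz' hz0]
    exact hf.cos_div_le_integral hα0 hα1 ht0 ht1 hz'
  · intro b hb
    have hlim : Tendsto (fun x : ℝ => (Complex.exp (t * Complex.I) * (kfun α x / x)).re) (𝓝[<] 1)
        (𝓝 (Real.cos t / (2 * α - 1))) := by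
      have h := (Complex.continuous_re.tendsto _).comp
        ((tendsto_kfun_div hα0).const_mul (Complex.exp (t * Complex.I)))
      rwa [Complex.re_mul_ofReal, Complex.exp_ofReal_mul_I_re, mul_one_div] at h
    refine ge_of_tendsto hlim ?_
    filter_upwards [Ioo_mem_nhdsLT (zero_lt_one' ℝ)] with x hx
    exact hb ⟨kfun α, hk, x, (hmem x hx).1, (hmem x hx).2, rfl⟩
  · have h := hmem (1 / 2) (by norm_num)
    exact ⟨_, kfun α, hk, _, h.1, h.2, rfl⟩
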